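/- arXiv:2204.00898 — 3 statements merged into one kernel-verified Lean document; each statement's English description precedes it below -/
import Mathlib

section
/- (Theorem 1, fully deterministic case.) Let X, Y, A, Z be types with deterministic MOB-MOMDP dynamics fX : X → A → X, fY : X → Y → X → Y, step (x, y) a := (fX x a, fY x y (fX x a)), and observation map obs (x, y) := (x, zobs x y) ∈ X × Z for some zobs : X → Y → Z. For every flat history policy π : List (X × Z) → A there exist a top-level policy πT : List (X × Z) → X and a bottom-level goal-conditioned policy πX : X → X → A such that for every initial state s₀ ∈ X × Y: (i) the closed-loop state trajectory and observation-history sequence of the hierarchical policy (which at each step plays a_t := πX x_t (πT h_t), where x_t is the first component of the last observation in h_t) coincide at every timestep with those of π; and (ii) at every timestep the commanded goal is reached in one step: fX x_t (πX x_t (πT h_t)) = πT h_t. In particular, for every reward function R : X × Y → ℝ, every discount γ : ℝ, and every horizon N, the discounted returns of the hierarchical policy and of π from s₀ are equal. -/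
/-- The fully observable component recorded in the last observation of a
history (with a default value for the empty history). -/
def lastX {X Z : Type*} [Inhabited X] (h : List (X × Z)) : X :=
  (h.getLast?.map Prod.fst).getD default

/-- Closed-loop run of a flat history policy `π`: at time `t` it returns the
pair (current state `s_t`, current observation history `h_t`), where
`h₀ = [obs s₀]`, `a_t = π h_t`, `s_{t+1} = step s_t a_t`, and
`h_{t+1} = h_t ++ [obs s_{t+1}]`. -/
def flatRun {X Y A Z : Type*} (step : X × Y → A → X × Y) (obs : X × Y → X × Z)
    (π : List (X × Z) → A) (s₀ : X × Y) : ℕ → (X × Y) × List (X × Z)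
  | 0 => (s₀, [obs s₀])
  | n + 1 =>
    let p := flatRun step obs π s₀ n
    let s' := step p.1 (π p.2)
    (s', p.2 ++ [obs s'])

/-- Theorem 1, fully deterministic case: every flat history policy `π` is
exactly replicated by a hierarchical HILMO policy pair `(πT, πX)` (whose
closed-loop run plays `a_t = πX x_t (πT h_t)` where `x_t` is the first
component of the last observation in `h_t`): the state trajectories and
observation histories coincide at every timestep, the commanded goal is
reached in one step at every timestep, and all discounted returns are
equal. -/
theorem hilmo_optimality_deterministic {X Y A Z : Type*} [Inhabited X]
    (fX : X → A → X) (fY : X → Y → X → Y) (zobs : X → Y → Z)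
    (step : X × Y → A → X × Y)
    (hstep : ∀ (x : X) (y : Y) (a : A), step (x, y) a = (fX x a, fY x y (fX x a)))
    (obs : X × Y → X × Z)
    (hobs : ∀ (x : X) (y : Y), obs (x, y) = (x, zobs x y))
    (π : List (X × Z) → A) :
    ∃ (πT : List (X × Z) → X) (πX : X → X → A),
      ∀ s₀ : X × Y,
        (∀ t : ℕ,
          flatRun step obs (fun h => πX (lastX h) (πT h)) s₀ t
            = flatRun step obs π s₀ t) ∧
        (∀ t : ℕ,
          fX (lastX (flatRun step obs (fun h => πX (lastX h) (πT h)) s₀ t).2)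
            (πX (lastX (flatRun step obs (fun h => πX (lastX h) (πT h)) s₀ t).2)
              (πT (flatRun step obs (fun h => πX (lastX h) (πT h)) s₀ t).2))
            = πT (flatRun step obs (fun h => πX (lastX h) (πT h)) s₀ t).2) ∧
        (∀ (R : X × Y → ℝ) (γ : ℝ) (N : ℕ),
          ∑ t ∈ Finset.range N,
              γ ^ t * R (flatRun step obs (fun h => πX (lastX h) (πT h)) s₀ t).1
            = ∑ t ∈ Finset.range N, γ ^ t * R (flatRun step obs π s₀ t).1) := by
  classical
  have hex : ∀ x g : X, ∃ a : A, (∃ b, fX x b = g) → fX x a = g := by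
    intro x g
    by_cases h : ∃ b, fX x b = g
    · obtain ⟨b, hb⟩ := h
      exact ⟨b, fun _ => hb⟩
    · exact ⟨π [], fun h' => absurd h' h⟩
  choose πX hπX using hex
  have key : ∀ h : List (X × Z),
      fX (lastX h) (πX (lastX h) (fX (lastX h) (π h))) = fX (lastX h) (π h) :=
    fun h => hπX _ _ ⟨π h, rfl⟩
  have hlast : ∀ (ρ : List (X × Z) → A) (s₀ : X × Y) (t : ℕ),
      lastX (flatRun step obs ρ s₀ t).2 = (flatRun step obs ρ s₀ t).1.1 := by
    have hobs1 : ∀ s : X × Y, (obs s).1 = s.1 := by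
      rintro ⟨x, y⟩
      rw [hobs]
    intro ρ s₀ t
    cases t <;> simp [flatRun, lastX, hobs1]
  have hstep' : ∀ (s : X × Y) (a b : A), fX s.1 a = fX s.1 b → step s a = step s b := by
    rintro ⟨x, y⟩ a b h
    simp only at h
    rw [hstep, hstep, h]
  refine ⟨fun h => fX (lastX h) (π h), πX, fun s₀ => ?_⟩
  have hrun : ∀ t : ℕ,
      flatRun step obs (fun h => πX (lastX h) (fX (lastX h) (π h))) s₀ t
        = flatRun step obs π s₀ t := by
    intro t
    induction t with
    | zero => rfl
    | succ n ih =>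
      have hs := hstep' (flatRun step obs π s₀ n).1 _ _
        (by simpa only [hlast] using key (flatRun step obs π s₀ n).2)
      simp only [flatRun, ih, hlast, hs]
  refine ⟨hrun, fun t => key _, fun R γ N => ?_⟩
  exact Finset.sum_congr rfl fun t _ => by rw [hrun t]
end

section
/- Let X, Y, A, Z be types with deterministic MOB-MOMDP dynamics fX : X → A → X, fY : X → Y → X → Y, step (x, y) a := (fX x a, fY x y (fX x a)), and observation map obs (x, y) := (x, zobs x y) ∈ X × Z for some zobs : X → Y → Z. Fix a reward function R : X × Y → ℝ, a discount γ : ℝ, a horizon N : ℕ, and an initial state s₀ ∈ X × Y. Then the set of N-step discounted returns { ∑_{n < N} γ^n · R (s_n^π) : π a flat history policy List (X × Z) → A } equals the set { ∑_{n < N} γ^n · R (s_n^{(πT, πX)}) : (πT, πX) a hierarchical policy pair }, where s_n^π and s_n^{(πT, πX)} denote the respective closed-loop state trajectories from s₀. In particular, the optimal achievable return over flat history policies equals the optimal achievable return over hierarchical HILMO policies. -/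
/-- In a deterministic MOB-MOMDP, the set of achievable N-step discounted
returns of flat history policies equals the set of achievable N-step
discounted returns of hierarchical HILMO policy pairs (whose closed-loop run
plays `a_t = πX x_t (πT h_t)` where `x_t` is the first component of the last
observation in `h_t`); in particular the optimal achievable returns
coincide. -/
theorem hilmo_return_sets_eq_deterministic {X Y A Z : Type*} [Inhabited X]
    (fX : X → A → X) (fY : X → Y → X → Y) (zobs : X → Y → Z)
    (step : X × Y → A → X × Y)
    (hstep : ∀ (x : X) (y : Y) (a : A), step (x, y) a = (fX x a, fY x y (fX x a)))
    (obs : X × Y → X × Z)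
    (hobs : ∀ (x : X) (y : Y), obs (x, y) = (x, zobs x y))
    (R : X × Y → ℝ) (γ : ℝ) (N : ℕ) (s₀ : X × Y) :
    {v : ℝ | ∃ π : List (X × Z) → A,
        v = ∑ t ∈ Finset.range N, γ ^ t * R (flatRun step obs π s₀ t).1}
      = {v : ℝ | ∃ (πT : List (X × Z) → X) (πX : X → X → A),
        v = ∑ t ∈ Finset.range N,
              γ ^ t * R (flatRun step obs (fun h => πX (lastX h) (πT h)) s₀ t).1} := by
  classical
  ext v
  constructor
  · rintro ⟨π, rfl⟩
    have hX : ∀ (x g : X), ∃ a : A, (∃ b, fX x b = g) → fX x a = g := by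
      intro x g
      by_cases h : ∃ b, fX x b = g
      · obtain ⟨b, hb⟩ := h
        exact ⟨b, fun _ => hb⟩
      · exact ⟨π [], fun h' => absurd h' h⟩
    choose πX hπX using hX
    refine ⟨fun h => fX (lastX h) (π h), πX, ?_⟩
    have hobs1 : ∀ s, (obs s).1 = s.1 := by
      rintro ⟨x, y⟩
      rw [hobs]
    have hlast : ∀ t, lastX (flatRun step obs π s₀ t).2 = (flatRun step obs π s₀ t).1.1 := by
      intro t
      cases t <;> simp [flatRun, lastX, hobs1]
    have hrun : ∀ t, flatRun step obs
        (fun h => πX (lastX h) (fX (lastX h) (π h))) s₀ t = flatRun step obs π s₀ t := by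
      intro t
      induction t with
      | zero => rfl
      | succ n ih =>
        have key : step (flatRun step obs π s₀ n).1
            (πX (lastX (flatRun step obs π s₀ n).2)
              (fX (lastX (flatRun step obs π s₀ n).2) (π (flatRun step obs π s₀ n).2)))
            = step (flatRun step obs π s₀ n).1 (π (flatRun step obs π s₀ n).2) := by
          rw [hlast]
          generalize flatRun step obs π s₀ n = p
          obtain ⟨⟨x, y⟩, h⟩ := p
          simp only [hstep]
          rw [hπX x (fX x (π h)) ⟨_, rfl⟩]
        simp only [flatRun, ih, key]
    simp only [hrun]
  · rintro ⟨πT, πX, rfl⟩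
    exact ⟨_, rfl⟩
end

section
/- (Theorem 1, deterministic fully observable dynamics with stochastic partially observable dynamics.) Let X, Y, A, Z be types with a deterministic transition function fX : X → A → X of the fully observable component, a stochastic transition kernel TY : X → Y → X → PMF Y of the partially observable component, and a stochastic action-independent observation kernel Zk : X → Y → PMF Z (observations are (x, z) pairs, always revealing x). For a flat history policy π : List (X × Z) → A, define for each horizon N and initial state s₀ = (x₀, y₀) the N-step closed-loop trajectory distribution Traj_N(π, s₀) ∈ PMF (List ((X × Y) × (X × Z))) over joint state–observation sequences, by first sampling z₀ from Zk x₀ y₀ to form h₀ := [(x₀, z₀)], and then repeatedly, given current state (x, y) and history h, playing a := π h, setting x' := fX x a, sampling y' from TY x y x' and z' from Zk x' y', recording ((x', y'), (x', z')) and appending (x', z') to h. Then for every flat history policy π there exist πT : List (X × Z) → X and πX : X → X → A such that for every initial state s₀ and every horizon N, the trajectory distribution of the hierarchical policy (which at each step plays a := πX x (πT h), where x is the first component of the last observation in h) equals Traj_N(π, s₀); consequently, for every reward function R : X × Y → ℝ, every discount γ : ℝ, and every horizon N, the expected discounted returns of the two policies from s₀ coincide, and at every step the commanded goal is reached in one step: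 fX x (πX x (πT h)) = πT h. -/
/-- Auxiliary trajectory distribution: starting from current state `s` and
current observation history `h`, run the history policy `π` for `N` steps,
recording at each step the joint (next state, next observation) pair: play
`a := π h`, set `x' := fX s.1 a`, sample `y'` from `TY s.1 s.2 x'` and `z'`
from `Zk x' y'`, record `((x', y'), (x', z'))`, and append `(x', z')` to the
history. -/
noncomputable def trajAux {X Y A Z : Type*}
    (fX : X → A → X) (TY : X → Y → X → PMF Y) (Zk : X → Y → PMF Z)
    (π : List (X × Z) → A) :
    ℕ → X × Y → List (X × Z) → PMF (List ((X × Y) × (X × Z)))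
  | 0, _, _ => PMF.pure []
  | N + 1, s, h =>
    let x' := fX s.1 (π h)
    (TY s.1 s.2 x').bind fun y' =>
      (Zk x' y').bind fun z' =>
        (trajAux fX TY Zk π N (x', y') (h ++ [(x', z')])).map
          fun l => ((x', y'), (x', z')) :: l

/-- `N`-step closed-loop trajectory distribution `Traj_N(π, s₀)` of a history
policy `π` from initial state `s₀`: first sample `z₀` from `Zk x₀ y₀` to form
the initial history `[(x₀, z₀)]`, then run `π` for `N` steps. -/
noncomputable def traj {X Y A Z : Type*}
    (fX : X → A → X) (TY : X → Y → X → PMF Y) (Zk : X → Y → PMF Z)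
    (π : List (X × Z) → A) (N : ℕ) (s₀ : X × Y) :
    PMF (List ((X × Y) × (X × Z))) :=
  (Zk s₀.1 s₀.2).bind fun z₀ => trajAux fX TY Zk π N s₀ [(s₀.1, z₀)]

/-- Discounted return of a recorded trajectory. -/
def listReturn {X Y Z : Type*} (R : X × Y → ℝ) (γ : ℝ) :
    List ((X × Y) × (X × Z)) → ℝ
  | [] => 0
  | p :: l => R p.1 + γ * listReturn R γ l

theorem trajAux_congr_of_step {X Y A Z : Type*} [Inhabited X]
    (fX : X → A → X) (TY : X → Y → X → PMF Y) (Zk : X → Y → PMF Z)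
    (π₁ π₂ : List (X × Z) → A)
    (hstep : ∀ h, fX (lastX h) (π₁ h) = fX (lastX h) (π₂ h)) (N : ℕ) :
    ∀ (s : X × Y) (h : List (X × Z)), lastX h = s.1 →
      trajAux fX TY Zk π₁ N s h = trajAux fX TY Zk π₂ N s h := by
  induction N with
  | zero => intro s h _; rfl
  | succ N ih =>
    intro s h hs
    have e := hstep h
    rw [hs] at e
    simp only [trajAux, e]
    congr 1
    funext y'
    congr 1
    funext z'
    rw [ih _ _ (by simp [lastX])]

/-- Theorem 1 for deterministic fully observable dynamics with stochastic
partially observable dynamics and observations: every flat history policy `π`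
is exactly replicated by a hierarchical HILMO policy pair `(πT, πX)` (which
plays `a := πX x (πT h)` where `x` is the first component of the last
observation in `h`): the closed-loop trajectory distributions coincide for
every initial state and horizon, hence so do expected discounted returns, and
the commanded goal is always reached in one step. -/
theorem hilmo_optimality_stochastic_y {X Y A Z : Type*} [Inhabited X]
    (fX : X → A → X) (TY : X → Y → X → PMF Y) (Zk : X → Y → PMF Z)
    (π : List (X × Z) → A) :
    ∃ (πT : List (X × Z) → X) (πX : X → X → A),
      (∀ (s₀ : X × Y) (N : ℕ),
        traj fX TY Zk (fun h => πX (lastX h) (πT h)) N s₀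
          = traj fX TY Zk π N s₀) ∧
      (∀ (R : X × Y → ℝ) (γ : ℝ) (N : ℕ) (s₀ : X × Y),
        ∑' l : List ((X × Y) × (X × Z)),
            ((traj fX TY Zk (fun h => πX (lastX h) (πT h)) N s₀) l).toReal
              * listReturn R γ l
          = ∑' l : List ((X × Y) × (X × Z)),
              ((traj fX TY Zk π N s₀) l).toReal * listReturn R γ l) ∧
      (∀ h : List (X × Z), fX (lastX h) (πX (lastX h) (πT h)) = πT h) := by
  classical
  let πT : List (X × Z) → X := fun h => fX (lastX h) (π h)
  let πX : X → X → A := fun x g =>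
    if hg : ∃ a, fX x a = g then hg.choose else π []
  have hreach : ∀ h : List (X × Z),
      fX (lastX h) (πX (lastX h) (πT h)) = πT h := by
    intro h
    have hg : ∃ a, fX (lastX h) a = πT h := ⟨π h, rfl⟩
    simp only [πX, dif_pos hg]
    exact hg.choose_spec
  have htraj : ∀ (s₀ : X × Y) (N : ℕ),
      traj fX TY Zk (fun h => πX (lastX h) (πT h)) N s₀
        = traj fX TY Zk π N s₀ := by
    intro s₀ N
    unfold traj
    congr 1
    funext z₀
    exact trajAux_congr_of_step fX TY Zk _ π hreach N s₀ _ (by simp [lastX])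
  refine ⟨πT, πX, htraj, ?_, hreach⟩
  intro R γ N s₀
  rw [htraj]
end
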